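/- arXiv:1211.1601 — 7 statements merged into one kernel-verified Lean document; each statement's English description precedes it below -/
import Mathlib

section
/- Suppose a Gauss code G contains three pairwise disjoint pairs of cyclically consecutive points labelled, in order, (c₁, O)(c₂, O), (c₁, U)(c₃, O), and (c₂, U)(c₃, U), where ε(c₁) = ε(c₂) = ε(c₃) = +1, and let G' be obtained from G by transposing the two labels within each of these three pairs (the oriented third Reidemeister move with all three crossings positive). Then λ is unchanged on every arc outside the three pairs, W_{G'}(c) = W_G(c) for every crossing c of G, and P_{G'}(t) = P_G(t). -/
open Finset

/-- A Gauss code with `n` crossings: the `2*n` points are arranged in the cyclic order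
`0, 1, …, 2*n - 1` on `Fin (2*n)`; each pair `(c, x)` of a crossing `c : Fin n` and a
label `x : Bool` (`true` = O = over, `false` = U = under) occupies a distinct point
`pt (c, x)`, and each crossing carries a sign `±1`. -/
structure GaussCode (n : ℕ) where
  pt : Fin n × Bool → Fin (2 * n)
  inj : Function.Injective pt
  sign : Fin n → ℤ
  sign_unit : ∀ c, sign c = 1 ∨ sign c = -1

namespace GaussCode

/-- The cyclic distance from `i` forward to `j` in `Fin m`. -/
def cdist {m : ℕ} (i j : Fin m) : ℕ := (j.val + m - i.val) % m

/-- The cyclically next point after `i`. -/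
def next {m : ℕ} (i : Fin m) : Fin m := ⟨(i.val + 1) % m, Nat.mod_lt _ i.pos⟩

variable {n : ℕ}

/-- `firstO G i c` holds when the first occurrence of the crossing `c`, reading the
points cyclically forward starting from the arc immediately preceding the point `i`,
carries the label O. (Arcs are indexed by the point they immediately precede.) -/
def firstO (G : GaussCode n) (i : Fin (2 * n)) (c : Fin n) : Prop :=
  cdist i (G.pt (c, true)) < cdist i (G.pt (c, false))

instance (G : GaussCode n) (i : Fin (2 * n)) (c : Fin n) : Decidable (G.firstO i c) :=
  inferInstanceAs (Decidable (_ < _))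

/-- The Cheng coloring `λ` of the arc immediately preceding the point `i`: the sum of
`ε c` over all crossings `c` whose first occurrence, reading cyclically forward from
this arc, carries the label O. -/
def lam (G : GaussCode n) (i : Fin (2 * n)) : ℤ :=
  ∑ c : Fin n, if G.firstO i c then G.sign c else 0

/-- The writhe of a Gauss code: the sum of the signs of its crossings. -/
def wr (G : GaussCode n) : ℤ := ∑ c : Fin n, G.sign c

/-- The weight `W(c) = λ_O(c) - λ_U(c) - ε(c)` of a crossing `c`, where `λ_O(c)`
(resp. `λ_U(c)`) is `λ` of the arc immediately preceding the O (resp. U) point of `c`. -/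
def W (G : GaussCode n) (c : Fin n) : ℤ :=
  G.lam (G.pt (c, true)) - G.lam (G.pt (c, false)) - G.sign c

open LaurentPolynomial in
/-- The affine index polynomial `P_G(t) = Σ_c ε(c) (t^{W(c)} - 1) ∈ ℤ[t,t⁻¹]`. -/
noncomputable def P (G : GaussCode n) : LaurentPolynomial ℤ :=
  ∑ c : Fin n, G.sign c • (T (G.W c) - 1)

end GaussCode

namespace GaussCode

/-- The Gauss code `G'` obtained from `G` by transposing the two labels within each of
the three pairs of cyclically consecutive points labelled `(c₁, O)(c₂, O)`,
`(c₁, U)(c₃, O)` and `(c₂, U)(c₃, U)` (the oriented third Reidemeister move): the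
points, their cyclic order and the signs are unchanged, and the six labels are
permuted by the three transpositions `(c₁, O) ↔ (c₂, O)`, `(c₁, U) ↔ (c₃, O)` and
`(c₂, U) ↔ (c₃, U)`. -/
def r3swap {n : ℕ} (G : GaussCode n) (c₁ c₂ c₃ : Fin n) : GaussCode n where
  pt := fun p => G.pt ((Equiv.swap (c₁, true) (c₂, true))
      ((Equiv.swap (c₁, false) (c₃, true)) ((Equiv.swap (c₂, false) (c₃, false)) p)))
  inj := G.inj.comp ((Equiv.swap (c₁, true) (c₂, true)).injective.comp
      (((Equiv.swap (c₁, false) (c₃, true)).injective.comp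
        (Equiv.swap (c₂, false) (c₃, false)).injective)))
  sign := G.sign
  sign_unit := G.sign_unit

/-!
The move is a product of three transpositions of consecutive labels that belong to different
crossings. Such a transposition changes `λ` only on the arc between the two points: seen from
any other arc the two points are traversed one right after the other, so no crossing changes
which of its points comes first. As `λ` jumps by `∓ε(c)` across a point of `c`, moving the label
`p` past the label `q` adds the jump at `q` to the value of `λ` just before `p`, and subtracts the
jump at `p` from the value just before `q`. Over the three transpositions the weights of
`c₁, c₂, c₃` change by `ε(c₃) - ε(c₂)`, `ε(c₁) - ε(c₃)` and `ε(c₂) - ε(c₁)`, which vanish when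
the signs agree.
-/

theorem swap_lt_swap_iff_of_covBy {α : Type*} [LinearOrder α] {a b x y : α} (hab : a ⋖ b)
    (h : ¬(x = a ∧ y = b)) (h' : ¬(x = b ∧ y = a)) :
    Equiv.swap a b x < Equiv.swap a b y ↔ x < y := by
  have hlt : a < b := hab.lt
  have hx : x ≤ a ∨ b ≤ x := (le_or_gt x a).imp_right hab.ge_of_gt
  have hy : y ≤ a ∨ b ≤ y := (le_or_gt y a).imp_right hab.ge_of_gt
  grind

section CyclicOrder

variable {m : ℕ}

theorem cdist_eq_val_sub (i j : Fin m) : cdist i j = (j - i : Fin m).val := by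
  rw [Fin.val_sub, cdist]
  congr 1
  have := i.isLt
  omega

theorem next_eq_add_one [NeZero m] (i : Fin m) : next i = i + 1 := by
  ext
  rw [Fin.val_add, Fin.val_one', Nat.add_mod_mod, next]

theorem cdist_lt (i j : Fin m) : cdist i j < m := Nat.mod_lt _ i.pos

theorem cdist_self (i : Fin m) : cdist i i = 0 := by
  have : NeZero m := ⟨i.pos.ne'⟩
  rw [cdist_eq_val_sub, sub_self, Fin.val_zero]

theorem cdist_injective (i : Fin m) : Function.Injective (cdist i) := by
  have : NeZero m := ⟨i.pos.ne'⟩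
  intro j k h
  simpa only [cdist_eq_val_sub, Fin.val_inj, sub_left_inj] using h

theorem cdist_next_left {i j : Fin m} (h : j ≠ i) : cdist (next i) j + 1 = cdist i j := by
  have : NeZero m := ⟨i.pos.ne'⟩
  have hji : j - i ≠ 0 := sub_ne_zero.mpr h
  have hpos : (j - i).val ≠ 0 := Fin.val_ne_zero_iff.mpr hji
  rw [cdist_eq_val_sub, cdist_eq_val_sub, next_eq_add_one, ← sub_sub,
    Fin.val_sub_one_of_ne_zero hji, Nat.sub_one_add_one hpos]

theorem cdist_next_right {i j : Fin m} (h : i ≠ next j) : cdist i (next j) = cdist i j + 1 := by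
  have : NeZero m := ⟨i.pos.ne'⟩
  rw [next_eq_add_one] at h
  have hji : j + 1 - i ≠ 0 := sub_ne_zero.mpr h.symm
  have hpos : (j + 1 - i).val ≠ 0 := Fin.val_ne_zero_iff.mpr hji
  rw [cdist_eq_val_sub, cdist_eq_val_sub, next_eq_add_one, ← Nat.sub_one_add_one hpos,
    ← Fin.val_sub_one_of_ne_zero hji, sub_right_comm, add_sub_cancel_right]

theorem cdist_next_self (i : Fin m) : cdist (next i) i + 1 = m := by
  cases m with
  | zero => exact i.elim0
  | succ k => rw [cdist_eq_val_sub, next_eq_add_one, sub_add_cancel_left, Fin.coe_neg_one]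

end CyclicOrder

section Coloring

variable {n : ℕ} (G : GaussCode n)

theorem cdist_pt_injective (i : Fin (2 * n)) : Function.Injective fun p => cdist i (G.pt p) :=
  (cdist_injective i).comp G.inj

theorem firstO_next_iff {i : Fin (2 * n)} {c : Fin n}
    (hO : G.pt (c, true) ≠ i) (hU : G.pt (c, false) ≠ i) :
    G.firstO (next i) c ↔ G.firstO i c := by
  rw [firstO, firstO, ← cdist_next_left hO, ← cdist_next_left hU, Nat.add_lt_add_iff_right]

theorem firstO_pt_iff (c : Fin n) (x : Bool) : G.firstO (G.pt (c, x)) c ↔ x = true := by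
  have hne : cdist (G.pt (c, x)) (G.pt (c, true)) ≠ cdist (G.pt (c, x)) (G.pt (c, false)) :=
    (G.cdist_pt_injective _).ne (by simp)
  have hself := cdist_self (G.pt (c, x))
  cases x <;> simp only [firstO, Bool.false_eq_true, iff_false, iff_true] <;> omega

theorem firstO_next_pt_iff (c : Fin n) (x : Bool) :
    G.firstO (next (G.pt (c, x))) c ↔ x = false := by
  set i := next (G.pt (c, x))
  have hne : cdist i (G.pt (c, true)) ≠ cdist i (G.pt (c, false)) :=
    (G.cdist_pt_injective i).ne (by simp)
  have hlast : cdist i (G.pt (c, x)) + 1 = 2 * n := cdist_next_self _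
  have hO := cdist_lt i (G.pt (c, true))
  have hU := cdist_lt i (G.pt (c, false))
  cases x <;> simp only [firstO, Bool.true_eq_false, iff_false, iff_true] <;> omega

/-- The jump of the Cheng coloring `λ` across the point labelled `p`: it is `-ε(c)` at an over
point and `ε(c)` at an under point of the crossing `c`. -/
def jump (p : Fin n × Bool) : ℤ := if p.2 then -G.sign p.1 else G.sign p.1

theorem lam_next_pt (p : Fin n × Bool) :
    G.lam (next (G.pt p)) = G.lam (G.pt p) + G.jump p := by
  obtain ⟨c, x⟩ := p
  rw [← sub_eq_iff_eq_add', lam, lam, ← Finset.sum_sub_distrib, Finset.sum_eq_single c]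
  · simp only [firstO_pt_iff, firstO_next_pt_iff, jump]
    cases x <;> simp
  · intro b _ hbc
    have hne (y : Bool) : G.pt (b, y) ≠ G.pt (c, x) := G.inj.ne fun h => hbc (congrArg Prod.fst h)
    simp only [G.firstO_next_iff (hne true) (hne false), sub_self]
  · simp

end Coloring

section SwapLabels

variable {n : ℕ} {G : GaussCode n} {p q r s : Fin n × Bool}

/-- The Gauss code obtained from `G` by exchanging the labels `p` and `q`; the points, their
cyclic order and the signs stay in place. -/
def swapLabels (G : GaussCode n) (p q : Fin n × Bool) : GaussCode n where
  pt := G.pt ∘ Equiv.swap p q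
  inj := G.inj.comp (Equiv.swap p q).injective
  sign := G.sign
  sign_unit := G.sign_unit

theorem swapLabels_pt_left : (G.swapLabels p q).pt p = G.pt q :=
  congrArg G.pt (Equiv.swap_apply_left p q)

theorem swapLabels_pt_right : (G.swapLabels p q).pt q = G.pt p :=
  congrArg G.pt (Equiv.swap_apply_right p q)

theorem swapLabels_pt_of_ne (hp : r ≠ p) (hq : r ≠ q) : (G.swapLabels p q).pt r = G.pt r :=
  congrArg G.pt (Equiv.swap_apply_of_ne_of_ne hp hq)

theorem r3swap_eq_swapLabels (c₁ c₂ c₃ : Fin n) :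
    G.r3swap c₁ c₂ c₃ = ((G.swapLabels (c₁, true) (c₂, true)).swapLabels
      (c₁, false) (c₃, true)).swapLabels (c₂, false) (c₃, false) := rfl

/-- The labels `p` and `q` belong to different crossings and sit, in this order, at cyclically
consecutive points: the situation in which a Reidemeister move may exchange them. -/
structure IsConsecutive (G : GaussCode n) (p q : Fin n × Bool) : Prop where
  fst_ne : p.1 ≠ q.1
  pt_eq_next : G.pt q = next (G.pt p)

namespace IsConsecutive

theorem ne (h : G.IsConsecutive p q) : p ≠ q := fun hpq => h.fst_ne (congrArg Prod.fst hpq)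

theorem swapLabels (h : G.IsConsecutive r s) (hrp : r ≠ p) (hrq : r ≠ q) (hsp : s ≠ p)
    (hsq : s ≠ q) : (G.swapLabels p q).IsConsecutive r s where
  fst_ne := h.fst_ne
  pt_eq_next := by
    rw [swapLabels_pt_of_ne hrp hrq, swapLabels_pt_of_ne hsp hsq, h.pt_eq_next]

theorem cdist_pt_covBy (h : G.IsConsecutive p q) {i : Fin (2 * n)} (hi : i ≠ G.pt q) :
    cdist i (G.pt p) ⋖ cdist i (G.pt q) := by
  rw [h.pt_eq_next] at hi ⊢
  rw [cdist_next_right hi]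
  exact Order.covBy_add_one _

theorem firstO_swapLabels_iff (h : G.IsConsecutive p q) {i : Fin (2 * n)} (hi : i ≠ G.pt q)
    (c : Fin n) : (G.swapLabels p q).firstO i c ↔ G.firstO i c := by
  have hinj := G.cdist_pt_injective i
  have hcdist (r : Fin n × Bool) : cdist i ((G.swapLabels p q).pt r) =
      Equiv.swap (cdist i (G.pt p)) (cdist i (G.pt q)) (cdist i (G.pt r)) :=
    (hinj.swap_apply p q r).symm
  rw [firstO, firstO, hcdist, hcdist]
  refine swap_lt_swap_iff_of_covBy (h.cdist_pt_covBy hi) ?_ ?_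
  · rintro ⟨hp, hq⟩
    exact h.fst_ne (by rw [← hinj hp, ← hinj hq])
  · rintro ⟨hq, hp⟩
    exact h.fst_ne (by rw [← hinj hp, ← hinj hq])

theorem lam_swapLabels (h : G.IsConsecutive p q) {i : Fin (2 * n)} (hi : i ≠ G.pt q) :
    (G.swapLabels p q).lam i = G.lam i := by
  simp only [lam, h.firstO_swapLabels_iff hi]
  rfl

theorem lam_pt_swapLabels (h : G.IsConsecutive p q) (r : Fin n × Bool) :
    (G.swapLabels p q).lam ((G.swapLabels p q).pt r) =
      G.lam (G.pt r) + (if r = p then G.jump q else 0) - (if r = q then G.jump p else 0) := by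
  have hlam_p : (G.swapLabels p q).lam (G.pt p) = G.lam (G.pt p) :=
    h.lam_swapLabels (G.inj.ne h.ne)
  rcases eq_or_ne r p with rfl | hrp
  · have hjump := (G.swapLabels r q).lam_next_pt q
    rw [swapLabels_pt_right, ← h.pt_eq_next, hlam_p] at hjump
    rw [swapLabels_pt_left, hjump, if_pos rfl, if_neg h.ne, sub_zero]
    rfl
  rcases eq_or_ne r q with rfl | hrq
  · rw [swapLabels_pt_right, hlam_p, h.pt_eq_next, lam_next_pt, if_pos rfl, if_neg hrp, add_zero,
      add_sub_cancel_right]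
  · rw [swapLabels_pt_of_ne hrp hrq, h.lam_swapLabels (G.inj.ne hrq), if_neg hrp, if_neg hrq,
      add_zero, sub_zero]

end IsConsecutive

end SwapLabels

section Reidemeister

variable {n : ℕ} {G : GaussCode n} {c₁ c₂ c₃ : Fin n}

theorem isConsecutive_snd_swapLabels (h₂ : G.IsConsecutive (c₁, false) (c₃, true))
    (h₃ : G.IsConsecutive (c₂, false) (c₃, false)) :
    (G.swapLabels (c₁, true) (c₂, true)).IsConsecutive (c₁, false) (c₃, true) :=
  h₂.swapLabels (by simp) (by simp) (by simp [h₂.fst_ne.symm]) (by simp [h₃.fst_ne.symm])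

theorem isConsecutive_thd_swapLabels (h₁ : G.IsConsecutive (c₁, true) (c₂, true))
    (h₂ : G.IsConsecutive (c₁, false) (c₃, true)) (h₃ : G.IsConsecutive (c₂, false) (c₃, false)) :
    ((G.swapLabels (c₁, true) (c₂, true)).swapLabels (c₁, false) (c₃, true)).IsConsecutive
      (c₂, false) (c₃, false) :=
  (h₃.swapLabels (by simp) (by simp) (by simp) (by simp)).swapLabels
    (by simpa using h₁.fst_ne.symm) (by simp) (by simpa using h₂.fst_ne.symm) (by simp)

theorem lam_r3swap (h₁ : G.IsConsecutive (c₁, true) (c₂, true))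
    (h₂ : G.IsConsecutive (c₁, false) (c₃, true)) (h₃ : G.IsConsecutive (c₂, false) (c₃, false))
    {i : Fin (2 * n)} (hi₁ : i ≠ G.pt (c₂, true)) (hi₂ : i ≠ G.pt (c₃, true))
    (hi₃ : i ≠ G.pt (c₃, false)) : (G.r3swap c₁ c₂ c₃).lam i = G.lam i := by
  have h31 : c₃ ≠ c₁ := h₂.fst_ne.symm
  have h32 : c₃ ≠ c₂ := h₃.fst_ne.symm
  rw [r3swap_eq_swapLabels, (isConsecutive_thd_swapLabels h₁ h₂ h₃).lam_swapLabels,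
    (isConsecutive_snd_swapLabels h₂ h₃).lam_swapLabels, h₁.lam_swapLabels hi₁]
  · rwa [swapLabels_pt_of_ne (by simp [h31]) (by simp [h32])]
  · rwa [swapLabels_pt_of_ne (by simp [h31]) (by simp), swapLabels_pt_of_ne (by simp) (by simp)]

theorem W_r3swap (h₁ : G.IsConsecutive (c₁, true) (c₂, true))
    (h₂ : G.IsConsecutive (c₁, false) (c₃, true)) (h₃ : G.IsConsecutive (c₂, false) (c₃, false))
    (c : Fin n) :
    (G.r3swap c₁ c₂ c₃).W c = G.W c + (if c = c₁ then G.sign c₃ - G.sign c₂ else 0) +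
      (if c = c₂ then G.sign c₁ - G.sign c₃ else 0) +
      (if c = c₃ then G.sign c₂ - G.sign c₁ else 0) := by
  have hsign : (G.r3swap c₁ c₂ c₃).sign = G.sign := rfl
  have hjump (p q r : Fin n × Bool) (H : GaussCode n) : (H.swapLabels p q).jump r = H.jump r := rfl
  rw [W, W, hsign, r3swap_eq_swapLabels]
  simp only [(isConsecutive_thd_swapLabels h₁ h₂ h₃).lam_pt_swapLabels,
    (isConsecutive_snd_swapLabels h₂ h₃).lam_pt_swapLabels, h₁.lam_pt_swapLabels, hjump]
  simp only [jump, Prod.mk.injEq, and_true, and_false, Bool.false_eq_true, Bool.true_eq_false,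
    if_true, if_false]
  split_ifs <;> ring

theorem r3_invariance_general (h₁ : G.IsConsecutive (c₁, true) (c₂, true))
    (h₂ : G.IsConsecutive (c₁, false) (c₃, true)) (h₃ : G.IsConsecutive (c₂, false) (c₃, false))
    (hs₂ : G.sign c₁ = G.sign c₂) (hs₃ : G.sign c₁ = G.sign c₃) :
    (∀ i : Fin (2 * n), i ≠ G.pt (c₂, true) → i ≠ G.pt (c₃, true) →
      i ≠ G.pt (c₃, false) → (G.r3swap c₁ c₂ c₃).lam i = G.lam i) ∧
    (∀ c : Fin n, (G.r3swap c₁ c₂ c₃).W c = G.W c) ∧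
    (G.r3swap c₁ c₂ c₃).P = G.P := by
  have hW (c : Fin n) : (G.r3swap c₁ c₂ c₃).W c = G.W c := by
    simp [W_r3swap h₁ h₂ h₃, ← hs₂, ← hs₃]
  refine ⟨fun i => lam_r3swap h₁ h₂ h₃, hW, ?_⟩
  simp only [P, hW]
  rfl

end Reidemeister

/-- Suppose a Gauss code `G` contains three pairwise disjoint pairs of
cyclically consecutive points labelled, in order, `(c₁, O)(c₂, O)`, `(c₁, U)(c₃, O)`
and `(c₂, U)(c₃, U)`, where `ε(c₁) = ε(c₂) = ε(c₃) = +1` (the distinctness of the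
crossings `c₁, c₂, c₃` together with the injectivity of the labelling forces the three
pairs to be pairwise disjoint), and let `G'` be obtained from `G` by transposing the
two labels within each of these three pairs (the oriented third Reidemeister move with
all three crossings positive).  Then `λ` is unchanged on every arc outside the three
pairs (the arcs strictly inside the pairs being those immediately preceding the second
point of each pair), `W_{G'}(c) = W_G(c)` for every crossing `c` of `G`, and
`P_{G'}(t) = P_G(t)`. -/
theorem r3_invariance {n : ℕ} (G : GaussCode n) (c₁ c₂ c₃ : Fin n)
    (h12 : c₁ ≠ c₂) (h13 : c₁ ≠ c₃) (h23 : c₂ ≠ c₃)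
    (hp1 : G.pt (c₂, true) = next (G.pt (c₁, true)))
    (hp2 : G.pt (c₃, true) = next (G.pt (c₁, false)))
    (hp3 : G.pt (c₃, false) = next (G.pt (c₂, false)))
    (hs1 : G.sign c₁ = 1) (hs2 : G.sign c₂ = 1) (hs3 : G.sign c₃ = 1) :
    (∀ i : Fin (2 * n), i ≠ G.pt (c₂, true) → i ≠ G.pt (c₃, true) →
      i ≠ G.pt (c₃, false) → (G.r3swap c₁ c₂ c₃).lam i = G.lam i) ∧
    (∀ c : Fin n, (G.r3swap c₁ c₂ c₃).W c = G.W c) ∧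
    (G.r3swap c₁ c₂ c₃).P = G.P :=
  r3_invariance_general ⟨h12, hp1⟩ ⟨h13, hp2⟩ ⟨h23, hp3⟩ (hs1.trans hs2.symm) (hs1.trans hs3.symm)

end GaussCode
end

section
/- For every Gauss code G and every crossing c, the weight of c computed in the reverse code satisfies W_Ḡ(c) = − W_G(c). -/
open Finset

namespace GaussCode

/-- The reverse `Ḡ` of a Gauss code `G`: the same points, labels and signs, but with
the reversed cyclic order.  The point at position `v` of `G` sits at position
`2*n - 1 - v` of `Ḡ`, so that the traversal order of `Ḡ` is the reverse of that of `G`.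
It encodes the knot with reversed orientation; crossing signs are unchanged. -/
def rev {n : ℕ} (G : GaussCode n) : GaussCode n where
  pt := fun p => ⟨2 * n - 1 - (G.pt p).val, by have := (G.pt p).isLt; omega⟩
  inj := by
    intro p q h
    apply G.inj
    have h1 := (G.pt p).isLt
    have h2 := (G.pt q).isLt
    rw [Fin.ext_iff] at h ⊢
    simp only at h
    omega
  sign := G.sign
  sign_unit := G.sign_unit

/-- The arc of the reverse code corresponding to a given arc: the arc of `G` between
the points at positions `i - 1` and `i` (the arc indexed by `i`) is, in `Ḡ`, the arc
between the points at positions `2*n - 1 - i` and `(2*n - i) % (2*n)`, hence is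
indexed by `(2*n - i) % (2*n)`. -/
def revArc {m : ℕ} (i : Fin m) : Fin m := ⟨(m - i.val) % m, Nat.mod_lt _ i.pos⟩

end GaussCode

namespace GaussCode

/-!
Reading the reverse code from an arc meets the points in the opposite order, so exactly the
crossings not met first at O are now met first at O, and `λ_Ḡ = wr(G) - λ_G` on corresponding arcs.
The arc of `Ḡ` preceding a point is the arc of `G` following it, and passing a point of `c` changes
`λ_G` by `-ε(c)` at O and by `+ε(c)` at U. Hence
`W_Ḡ(c) = (wr - λ_O(c) + ε(c)) - (wr - λ_U(c) - ε(c)) - ε(c) = -W_G(c)`.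
-/

section CyclicDistance

variable {m : ℕ}

theorem cdist_eq_ite (i j : Fin m) :
    cdist i j = if i.val ≤ j.val then j.val - i.val else j.val + m - i.val := by
  unfold cdist
  split_ifs with h
  · rw [Nat.sub_add_comm h, Nat.add_mod_right, Nat.mod_eq_of_lt (by omega)]
  · exact Nat.mod_eq_of_lt (by omega)

theorem cdist_pos {i j : Fin m} (h : i ≠ j) : 0 < cdist i j :=
  Nat.pos_of_ne_zero fun h₀ => h (cdist_injective i ((cdist_self i).trans h₀.symm))

theorem val_next (i : Fin m) : (next i).val = if i.val + 1 = m then 0 else i.val + 1 := by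
  unfold next
  split_ifs with h
  · simp [h]
  · exact Nat.mod_eq_of_lt (lt_of_le_of_ne i.isLt h)

theorem val_revArc (i : Fin m) : (revArc i).val = if i.val = 0 then 0 else m - i.val := by
  unfold revArc
  split_ifs with h
  · simp [h]
  · exact Nat.mod_eq_of_lt (by omega)

theorem cdist_next_of_ne {i j : Fin m} (h : i ≠ j) : cdist (next i) j + 1 = cdist i j := by
  simp only [cdist_eq_ite, val_next]
  split_ifs <;> omega

theorem revArc_next (i : Fin m) : revArc (next i) = i.rev := by
  rw [Fin.ext_iff, val_revArc, val_next, Fin.val_rev]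
  by_cases h : i.val + 1 = m
  · rw [if_pos h, if_pos rfl, h, Nat.sub_self]
  · rw [if_neg h, if_neg (Nat.succ_ne_zero _)]

theorem cdist_revArc_rev_add_cdist (i j : Fin m) :
    cdist (revArc i) j.rev + cdist i j + 1 = m := by
  simp only [cdist_eq_ite, val_revArc, Fin.val_rev]
  split_ifs <;> omega

end CyclicDistance

section ChengColoring

variable {n : ℕ} (G : GaussCode n)

theorem pt_true_ne_pt_false (c : Fin n) : G.pt (c, true) ≠ G.pt (c, false) :=
  G.inj.ne (by simp)

theorem firstO_pt_true (c : Fin n) : G.firstO (G.pt (c, true)) c := by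
  rw [firstO, cdist_self]
  exact cdist_pos (G.pt_true_ne_pt_false c)

theorem not_firstO_pt_false (c : Fin n) : ¬ G.firstO (G.pt (c, false)) c := by
  simp [firstO, cdist_self]

theorem not_firstO_next_pt_true (c : Fin n) : ¬ G.firstO (next (G.pt (c, true))) c := by
  have hO := cdist_next_self (G.pt (c, true))
  have hU := cdist_lt (next (G.pt (c, true))) (G.pt (c, false))
  rw [firstO]
  omega

theorem firstO_next_pt_false (c : Fin n) : G.firstO (next (G.pt (c, false))) c := by
  have hU := cdist_next_self (G.pt (c, false))
  have hO := cdist_next_of_ne (G.pt_true_ne_pt_false c).symm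
  have hlt := cdist_lt (G.pt (c, false)) (G.pt (c, true))
  rw [firstO]
  omega

theorem firstO_next_pt_iff_of_ne {c d : Fin n} (h : d ≠ c) (x : Bool) :
    G.firstO (next (G.pt (c, x))) d ↔ G.firstO (G.pt (c, x)) d := by
  have hpt (y : Bool) : G.pt (c, x) ≠ G.pt (d, y) := G.inj.ne (by simp [h.symm])
  rw [firstO, firstO, ← cdist_next_of_ne (hpt true), ← cdist_next_of_ne (hpt false),
    Nat.add_lt_add_iff_right]

theorem lam_eq_lam_add_sign {i j : Fin (2 * n)} {c : Fin n} (hi : G.firstO i c)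
    (hj : ¬ G.firstO j c) (h : ∀ d ≠ c, (G.firstO i d ↔ G.firstO j d)) :
    G.lam i = G.lam j + G.sign c := by
  have hsum : ∑ d ∈ univ.erase c, (if G.firstO i d then G.sign d else 0) =
      ∑ d ∈ univ.erase c, if G.firstO j d then G.sign d else 0 :=
    sum_congr rfl fun d hd => by simp only [h d (ne_of_mem_erase hd)]
  rw [lam, lam, ← add_sum_erase _ _ (mem_univ c), ← add_sum_erase _ _ (mem_univ c), if_pos hi,
    if_neg hj, hsum]
  ring

theorem lam_next_pt_true (c : Fin n) :
    G.lam (next (G.pt (c, true))) = G.lam (G.pt (c, true)) - G.sign c :=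
  eq_sub_of_add_eq (G.lam_eq_lam_add_sign (G.firstO_pt_true c) (G.not_firstO_next_pt_true c)
    fun _ hd => (G.firstO_next_pt_iff_of_ne hd true).symm).symm

theorem lam_next_pt_false (c : Fin n) :
    G.lam (next (G.pt (c, false))) = G.lam (G.pt (c, false)) + G.sign c :=
  G.lam_eq_lam_add_sign (G.firstO_next_pt_false c) (G.not_firstO_pt_false c)
    fun _ hd => G.firstO_next_pt_iff_of_ne hd false

end ChengColoring

section Reversal

variable {n : ℕ} (G : GaussCode n)

theorem rev_sign (c : Fin n) : G.rev.sign c = G.sign c := rfl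

theorem rev_pt (p : Fin n × Bool) : G.rev.pt p = (G.pt p).rev := by
  simp only [rev, Fin.ext_iff, Fin.val_rev]
  omega

theorem rev_pt_eq_revArc_next (p : Fin n × Bool) : G.rev.pt p = revArc (next (G.pt p)) := by
  rw [rev_pt, revArc_next]

theorem firstO_rev_revArc (i : Fin (2 * n)) (c : Fin n) :
    G.rev.firstO (revArc i) c ↔ ¬ G.firstO i c := by
  have hO := cdist_revArc_rev_add_cdist i (G.pt (c, true))
  have hU := cdist_revArc_rev_add_cdist i (G.pt (c, false))
  have hne : cdist i (G.pt (c, true)) ≠ cdist i (G.pt (c, false)) :=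
    (cdist_injective i).ne (G.pt_true_ne_pt_false c)
  rw [firstO, firstO, rev_pt, rev_pt]
  omega

theorem lam_rev_revArc (i : Fin (2 * n)) : G.rev.lam (revArc i) = G.wr - G.lam i := by
  rw [lam, lam, wr, ← sum_sub_distrib]
  refine sum_congr rfl fun c _ => ?_
  simp only [firstO_rev_revArc, rev_sign]
  split_ifs <;> simp

theorem lam_rev_pt (p : Fin n × Bool) :
    G.rev.lam (G.rev.pt p) = G.wr - G.lam (next (G.pt p)) := by
  rw [rev_pt_eq_revArc_next, lam_rev_revArc]

end Reversal

/-- For every Gauss code `G` and every crossing `c`, the weight of `c`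
computed in the reverse code `Ḡ` satisfies `W_Ḡ(c) = - W_G(c)`. -/
theorem W_rev {n : ℕ} (G : GaussCode n) (c : Fin n) : G.rev.W c = - G.W c := by
  rw [W, W, lam_rev_pt, lam_rev_pt, lam_next_pt_true, lam_next_pt_false, rev_sign]
  ring

end GaussCode
end

section
/- Let R be a commutative ring with unit, let S be an R-module, let α be an invertible element of R, and let k ∈ S. Then the binary operations on S defined by a*b := αa + k and a#b := α⁻¹a − α⁻¹k (each depending only on the first argument) make S into a flat biquandle, i.e., axioms (1), (2) and (3) all hold. When α = 1 this flat biquandle (a*b = a + 1-type structure on ℤ, up to the choice of k) is the root structure underlying the Affine Index Polynomial. -/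
/-- A *flat biquandle* is a set `S` with two binary operations `(a, b) ↦ a * b`
(written `star`) and `(a, b) ↦ a # b` (written `sharp`) satisfying:
(1) for each `a ∈ S` there is a unique `x ∈ S` with `a # x = x` and `x * a = a`, and
a unique `y ∈ S` with `a * y = y` and `y # a = a`;
(2) for all `a, b ∈ S`, `(a # b) * (b * a) = a` and `(b * a) # (a # b) = b`, and for
all `a, b ∈ S` there exist unique `x, y ∈ S` with `x = b # y`, `y = a # x`,
`b = x * a` and `a = y * b`;
(3) for all `a, b, c ∈ S`, `(a # b) # c = (a # (c * b)) # (b # c)`,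
`(c * b) * a = (c * (a # b)) * (b * a)` and
`(b # c) * (a # (c * b)) = (b * a) # (c * (a # b))`. -/
def IsFlatBiquandle {S : Type*} (star sharp : S → S → S) : Prop :=
  (∀ a, ∃! x, sharp a x = x ∧ star x a = a) ∧
  (∀ a, ∃! y, star a y = y ∧ sharp y a = a) ∧
  (∀ a b, star (sharp a b) (star b a) = a ∧ sharp (star b a) (sharp a b) = b) ∧
  (∀ a b, ∃! p : S × S,
    p.1 = sharp b p.2 ∧ p.2 = sharp a p.1 ∧ b = star p.1 a ∧ a = star p.2 b) ∧
  (∀ a b c,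
    sharp (sharp a b) c = sharp (sharp a (star c b)) (sharp b c) ∧
    star (star c b) a = star (star c (sharp a b)) (star b a) ∧
    star (sharp b c) (sharp a (star c b)) = sharp (star b a) (star c (sharp a b)))

/-- The operations ignore their second argument, so the only content of the axioms is
`f ∘ g = g ∘ f = id`: the unique solutions can be read off their equations, and the third equation
of (3) is the commutation `f (g b) = g (f b)`. -/
theorem isFlatBiquandle_of_leftInverse_rightInverse {S : Type*} {f g : S → S}
    (left_inv : Function.LeftInverse g f) (right_inv : Function.RightInverse g f) :
    IsFlatBiquandle (fun a _ => f a) (fun a _ => g a) := by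
  refine ⟨fun a => ?existsUnique_sharp, fun a => ?existsUnique_star, fun a b => ?cancel,
    fun a b => ?existsUnique_pair, fun a b c => ?braid⟩
  case existsUnique_sharp => exact ⟨g a, ⟨rfl, right_inv a⟩, fun _ hx => hx.1.symm⟩
  case existsUnique_star => exact ⟨f a, ⟨rfl, left_inv a⟩, fun _ hy => hy.1.symm⟩
  case cancel => exact ⟨right_inv a, left_inv b⟩
  case existsUnique_pair =>
    exact ⟨(g b, g a), ⟨rfl, rfl, (right_inv b).symm, (right_inv a).symm⟩,
      fun _ hp => Prod.ext hp.1 hp.2.1⟩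
  case braid =>
    have commute : f (g b) = g (f b) := (right_inv b).trans (left_inv b).symm
    exact ⟨rfl, rfl, commute⟩

theorem isFlatBiquandle_affine_general {G S : Type*} [Group G] [AddGroup S]
    [DistribMulAction G S] (α : G) (k : S) :
    IsFlatBiquandle (fun a _ : S => α • a + k) (fun a _ : S => α⁻¹ • a - α⁻¹ • k) := by
  apply isFlatBiquandle_of_leftInverse_rightInverse
  · intro a
    calc
      α⁻¹ • (α • a + k) - α⁻¹ • k = a + α⁻¹ • k - α⁻¹ • k := by rw [smul_add, inv_smul_smul]
      _ = a := add_sub_cancel_right _ _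
  · intro a
    calc
      α • (α⁻¹ • a - α⁻¹ • k) + k = a - k + k := by
        rw [smul_sub, smul_inv_smul, smul_inv_smul]
      _ = a := sub_add_cancel a k

/-- Let `R` be a commutative ring with unit, let `S` be an
`R`-module, let `α` be an invertible element of `R`, and let `k ∈ S`.  Then the binary
operations on `S` defined by `a * b := α a + k` and `a # b := α⁻¹ a - α⁻¹ k` (each
depending only on the first argument) make `S` into a flat biquandle, i.e. axioms
(1), (2) and (3) all hold.  (When `α = 1` this flat biquandle is the root structure
underlying the Affine Index Polynomial.) -/
theorem isFlatBiquandle_affine {R : Type*} [CommRing R] {S : Type*} [AddCommGroup S]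
    [Module R S] (α : Rˣ) (k : S) :
    IsFlatBiquandle (fun a _ : S => (α : R) • a + k)
      (fun a _ : S => ((α⁻¹ : Rˣ) : R) • a - ((α⁻¹ : Rˣ) : R) • k) :=
  isFlatBiquandle_affine_general α k
end

section
/- Let R be a commutative ring with unit and let r, s, p, q, k, l ∈ R with 1 − q invertible. Define binary operations on R by a*b := ra + sb + k and a#b := pa + qb + l. Then the following are equivalent: (i) for every a ∈ R there exists x ∈ R with a#x = x and x*a = a; (ii) rp + (1−q)s − (1−q) = 0 and rl + k(1−q) = 0. Moreover, when these hold, for each a ∈ R the element x is unique and equals (1−q)⁻¹(pa + l). -/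
/-!
Because `1 - q` is invertible, `a # x = x` has exactly one solution `x`, and it is an affine
function of `a`. Substituting it, `x * a = a` says that an affine self-map fixes `a`. An affine map
is the identity exactly when its linear part is `1` and its constant term is `0`; clearing the
inverse of `1 - q` from these two equations gives the two conditions on the coefficients.
-/

section DistribMulAction

variable {R M : Type*} [Monoid R] [AddMonoid M] [DistribMulAction R M]

theorem forall_smul_add_eq_self_iff [FaithfulSMul R M] {m : R} {c : M} :
    (∀ a : M, m • a + c = a) ↔ m = 1 ∧ c = 0 := by
  refine ⟨fun h => ?_, fun ⟨hm, hc⟩ a => by rw [hm, hc, one_smul, add_zero]⟩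
  have hc : c = 0 := by simpa using h 0
  have hm : ∀ a : M, m • a = (1 : R) • a := fun a => by simpa [hc] using h a
  exact ⟨eq_of_smul_eq_smul hm, hc⟩

theorem mul_units_inv_smul_add_eq_iff {r : R} {u : Rˣ} (hru : Commute r u) {x y z : M} :
    (r * ↑u⁻¹) • x + y = z ↔ r • x + (u : R) • y = (u : R) • z := by
  have hcancel : (u : R) * (r * ↑u⁻¹) = r := by
    rw [← mul_assoc, ← hru.eq, Units.mul_inv_cancel_right]
  rw [← smul_left_cancel_iff u, Units.smul_def, Units.smul_def, smul_add, smul_smul, hcancel]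

end DistribMulAction

section Module

variable {R M : Type*} [Ring R] [AddCommGroup M] [Module R M]

theorem add_smul_eq_self_iff {q : R} {u : Rˣ} (hu : (u : R) = 1 - q) {b x : M} :
    b + q • x = x ↔ x = (↑u⁻¹ : R) • b := by
  rw [← Units.smul_def, eq_inv_smul_iff, Units.smul_def, hu, sub_smul, one_smul, sub_eq_iff_eq_add,
    eq_comm]

theorem affine_first_move_solution_iff {q : R} {u : Rˣ} (hu : (u : R) = 1 - q) {r s p : R}
    {k l a x : M} :
    (p • a + q • x + l = x ∧ r • x + s • a + k = a) ↔
      x = (↑u⁻¹ : R) • (p • a + l) ∧ (r * ↑u⁻¹ * p + s) • a + ((r * ↑u⁻¹) • l + k) = a := by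
  rw [add_right_comm, add_smul_eq_self_iff hu]
  refine and_congr_right fun hx => ?_
  have hsubst : r • x + s • a + k = (r * ↑u⁻¹ * p + s) • a + ((r * ↑u⁻¹) • l + k) := by
    rw [hx, smul_smul, smul_add, smul_smul, add_smul]
    abel
  rw [hsubst]

theorem affine_first_move_coeff_iff {r s p : R} {k l : M} {u : Rˣ} (hru : Commute r u) :
    (r * ↑u⁻¹ * p + s = 1 ∧ (r * ↑u⁻¹) • l + k = 0) ↔
      (r * p + u * s - u = 0 ∧ r • l + (u : R) • k = 0) := by
  have hlin : r * ↑u⁻¹ * p + s = 1 ↔ r * p + u * s = u := by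
    simpa only [smul_eq_mul, mul_one] using
      mul_units_inv_smul_add_eq_iff hru (x := p) (y := s) (z := 1)
  rw [hlin, mul_units_inv_smul_add_eq_iff hru, smul_zero, sub_eq_zero]

theorem affine_first_move_iff_general [FaithfulSMul R M] (r s p q : R) (k l : M) (u : Rˣ)
    (hu : (u : R) = 1 - q) (hru : Commute r u) :
    ((∀ a : M, ∃ x : M, p • a + q • x + l = x ∧ r • x + s • a + k = a) ↔
      (r * p + (1 - q) * s - (1 - q) = 0 ∧ r • l + (1 - q) • k = 0)) ∧
    ((r * p + (1 - q) * s - (1 - q) = 0 ∧ r • l + (1 - q) • k = 0) →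
      ∀ a x : M, (p • a + q • x + l = x ∧ r • x + s • a + k = a) ↔
        x = (↑u⁻¹ : R) • (p • a + l)) := by
  simp only [affine_first_move_solution_iff hu, exists_eq_left]
  rw [← hu, ← affine_first_move_coeff_iff hru, ← forall_smul_add_eq_self_iff]
  exact ⟨Iff.rfl, fun hfix a _ => and_iff_left (hfix a)⟩

end Module

/-- Let `R` be a commutative ring with unit and let
`r, s, p, q, k, l ∈ R` with `1 - q` invertible, say with inverse `v`.  Define binary
operations on `R` by `a * b := r a + s b + k` and `a # b := p a + q b + l`.  Then the
following are equivalent: (i) for every `a ∈ R` there exists `x ∈ R` with `a # x = x`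
and `x * a = a`; (ii) `r p + (1 - q) s - (1 - q) = 0` and `r l + k (1 - q) = 0`.
Moreover, when these hold, for each `a ∈ R` the element `x` is unique and equals
`(1 - q)⁻¹ (p a + l) = v (p a + l)`. -/
theorem affine_first_move_iff {R : Type*} [CommRing R] (r s p q k l v : R)
    (hv : (1 - q) * v = 1) :
    ((∀ a : R, ∃ x : R, p * a + q * x + l = x ∧ r * x + s * a + k = a) ↔
      (r * p + (1 - q) * s - (1 - q) = 0 ∧ r * l + k * (1 - q) = 0)) ∧
    ((r * p + (1 - q) * s - (1 - q) = 0 ∧ r * l + k * (1 - q) = 0) →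
      ∀ a x : R, (p * a + q * x + l = x ∧ r * x + s * a + k = a) ↔
        x = v * (p * a + l)) := by
  rw [mul_comm k]
  exact affine_first_move_iff_general r s p q k l (Units.mkOfMulEqOne (1 - q) v hv) rfl (.all ..)
end

section
/- Let R be a commutative ring with unit and let r, s, p, q, k, l ∈ R. Define binary operations on R by a*b := ra + sb + k and a#b := pa + qb + l. If the identities (a#b)*(b*a) = a and (b*a)#(a#b) = b hold for all a, b ∈ R, then pr + q² = 1, p(s+q) = 0, pk + ql + l = 0, pr + s² = 1, r(s+q) = 0, and rl + sk + k = 0. If moreover R has no zero divisors, then either s + q = 0, or p = r = 0. -/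
/-!
Substituting the operations into `(a # b) * (b * a)` gives an affine expression in `a` and `b`;
it equals `a` identically only if the coefficients are `1`, `0`, `0`. The second identity is the
first one with the two operations exchanged and `a`, `b` swapped.
-/

theorem forall_mul_add_mul_add_eq_left_iff {R : Type*} [NonAssocSemiring R] {α β γ : R} :
    (∀ a b : R, α * a + β * b + γ = a) ↔ α = 1 ∧ β = 0 ∧ γ = 0 := by
  refine ⟨fun h => ?_, ?_⟩
  · have hγ : γ = 0 := by simpa using h 0 0
    have hα : α = 1 := by simpa [hγ] using h 1 0
    have hβ : β = 0 := by simpa [hγ] using h 0 1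
    exact ⟨hα, hβ, hγ⟩
  · rintro ⟨rfl, rfl, rfl⟩ a b
    simp

/-- The affine binary operation with linear coefficients `r`, `s` and constant term `k`: the form
of both operations of an affine flat biquandle. -/
def affineOp {R : Type*} [Add R] [Mul R] (r s k a b : R) : R :=
  r * a + s * b + k

section CommSemiring

variable {R : Type*} [CommSemiring R]

theorem affineOp_affineOp_affineOp_swap (r s k p q l a b : R) :
    affineOp r s k (affineOp p q l a b) (affineOp r s k b a) =
      affineOp (p * r + s ^ 2) (r * (s + q)) (r * l + s * k + k) a b := by
  unfold affineOp
  ring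

theorem forall_affineOp_affineOp_affineOp_swap_eq_left_iff {r s k p q l : R} :
    (∀ a b : R, affineOp r s k (affineOp p q l a b) (affineOp r s k b a) = a) ↔
      p * r + s ^ 2 = 1 ∧ r * (s + q) = 0 ∧ r * l + s * k + k = 0 := by
  simp only [affineOp_affineOp_affineOp_swap]
  exact forall_mul_add_mul_add_eq_left_iff

theorem affine_second_move_conditions_general (r s p q k l : R)
    (star : R → R → R) (sharp : R → R → R)
    (hstar : ∀ a b : R, star a b = r * a + s * b + k)
    (hsharp : ∀ a b : R, sharp a b = p * a + q * b + l)
    (H : ∀ a b : R, star (sharp a b) (star b a) = a ∧ sharp (star b a) (sharp a b) = b) :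
    (p * r + q ^ 2 = 1 ∧ p * (s + q) = 0 ∧ p * k + q * l + l = 0 ∧
      p * r + s ^ 2 = 1 ∧ r * (s + q) = 0 ∧ r * l + s * k + k = 0) ∧
    ((∀ x y : R, x * y = 0 → x = 0 ∨ y = 0) →
      (s + q = 0 ∨ (p = 0 ∧ r = 0))) := by
  obtain rfl : star = affineOp r s k := funext₂ hstar
  obtain rfl : sharp = affineOp p q l := funext₂ hsharp
  obtain ⟨hprs, hr, hk⟩ :=
    forall_affineOp_affineOp_affineOp_swap_eq_left_iff.1 fun a b => (H a b).1
  obtain ⟨hprq, hp, hl⟩ :=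
    forall_affineOp_affineOp_affineOp_swap_eq_left_iff.1 fun b a => (H a b).2
  rw [mul_comm r p] at hprq
  rw [add_comm q s] at hp
  refine ⟨⟨hprq, hp, hl, hprs, hr, hk⟩, fun eq_zero_or_eq_zero => ?_⟩
  exact or_iff_not_imp_left.2 fun hsq =>
    ⟨(eq_zero_or_eq_zero _ _ hp).resolve_right hsq, (eq_zero_or_eq_zero _ _ hr).resolve_right hsq⟩

end CommSemiring

/-- Let `R` be a commutative ring with unit and let
`r, s, p, q, k, l ∈ R`.  Define binary operations on `R` by `a * b := r a + s b + k`
and `a # b := p a + q b + l`.  If the identities `(a # b) * (b * a) = a` and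
`(b * a) # (a # b) = b` hold for all `a, b ∈ R` (the direct second flat Reidemeister
move), then `p r + q² = 1`, `p (s + q) = 0`, `p k + q l + l = 0`, `p r + s² = 1`,
`r (s + q) = 0` and `r l + s k + k = 0`.  If moreover `R` has no zero divisors, then
either `s + q = 0`, or `p = 0` and `r = 0`. -/
theorem affine_second_move_conditions {R : Type*} [CommRing R] (r s p q k l : R)
    (star : R → R → R) (sharp : R → R → R)
    (hstar : ∀ a b : R, star a b = r * a + s * b + k)
    (hsharp : ∀ a b : R, sharp a b = p * a + q * b + l)
    (H : ∀ a b : R, star (sharp a b) (star b a) = a ∧ sharp (star b a) (sharp a b) = b) :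
    (p * r + q ^ 2 = 1 ∧ p * (s + q) = 0 ∧ p * k + q * l + l = 0 ∧
      p * r + s ^ 2 = 1 ∧ r * (s + q) = 0 ∧ r * l + s * k + k = 0) ∧
    ((∀ x y : R, x * y = 0 → x = 0 ∨ y = 0) →
      (s + q = 0 ∨ (p = 0 ∧ r = 0))) :=
  affine_second_move_conditions_general r s p q k l star sharp hstar hsharp H
end

section
/- Let R be a commutative ring with unit, let q, p, r ∈ R and k, l ∈ R, and assume r is invertible. Define binary operations on R by a*b := ra − qb + k and a#b := pa + qb + l. Then the following are equivalent: (i) for all a, b ∈ R there exist x, y ∈ R with x = b#y, y = a#x, b = x*a, and a = y*b; (ii) rp + q² = 1 and rl + (1−q)k = 0. Moreover, when these hold, x and y are unique, namely x = r⁻¹(qa + b − k) and y = r⁻¹(qb + a − k). -/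
/-!
A reverse-oriented second move at `(a, b)` forces both
`(r p + q² - 1) b + (r l + (1 - q) k) = 0` and `(r p + q² - 1) x + (p k + (1 + q) l) = 0`:
eliminate `x` and `y` from the four equations, or everything but `x`. Taking `b = 0` isolates the
first constant, and letting `b` vary then kills the common coefficient. Conversely, if the
coefficient and both constants vanish, then any `x` with `r x = q a + b - k` gives a move, with
`y = a # x`. When `r` can be cancelled the second constant is redundant, because
`r (p k + (1 + q) l) = (r p + q² - 1) k + (1 + q) (r l + (1 - q) k)`.
-/

open Function

/-- The labelling condition of the reverse-oriented second flat Reidemeister move, whose outer arcs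
carry `a`, `b` and whose inner arcs carry `x`, `y`. It is stated for arbitrary binary operations
`star` (written `*` in the paper) and `sharp` (written `#`). -/
def IsReverseSecondMove {M : Type*} (star sharp : M → M → M) (a b x y : M) : Prop :=
  x = sharp b y ∧ y = sharp a x ∧ b = star x a ∧ a = star y b

section Affine

variable {R M : Type*} [CommRing R] [AddCommGroup M] [Module R M]

/-- The affine operation `a * b = r a - q b + k`, with labels in an `R`-module. -/
def affineStar (q r : R) (k a b : M) : M := r • a - q • b + k

/-- The affine operation `a # b = p a + q b + l`, with labels in an `R`-module. -/
def affineSharp (q p : R) (l a b : M) : M := p • a + q • b + l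

variable {q p r : R} {k l a b x y : M}

namespace IsReverseSecondMove

theorem smul_left_eq (h : IsReverseSecondMove (affineStar q r k) (affineSharp q p l) a b x y) :
    r • x = q • a + b - k := by
  obtain ⟨-, -, hb, -⟩ := h
  rw [affineStar] at hb
  linear_combination (norm := module) -hb

theorem smul_right_eq (h : IsReverseSecondMove (affineStar q r k) (affineSharp q p l) a b x y) :
    r • y = q • b + a - k := by
  obtain ⟨-, -, -, ha⟩ := h
  rw [affineStar] at ha
  linear_combination (norm := module) -ha

theorem smul_outer_add_eq_zero
    (h : IsReverseSecondMove (affineStar q r k) (affineSharp q p l) a b x y) :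
    (r * p + q ^ 2 - 1) • b + (r • l + (1 - q) • k) = 0 := by
  have hx : x = p • b + q • y + l := h.1
  linear_combination (norm := module) -r • hx + h.smul_left_eq - q • h.smul_right_eq

theorem smul_inner_add_eq_zero
    (h : IsReverseSecondMove (affineStar q r k) (affineSharp q p l) a b x y) :
    (r * p + q ^ 2 - 1) • x + (p • k + (1 + q) • l) = 0 := by
  have hx : x = p • b + q • y + l := h.1
  have hy : y = p • a + q • x + l := h.2.1
  linear_combination (norm := module) p • h.smul_left_eq - hx - q • hy

end IsReverseSecondMove

theorem isReverseSecondMove_affine_iff (hpq : r * p + q ^ 2 = 1)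
    (hkl : r • l + (1 - q) • k = 0) (hlk : p • k + (1 + q) • l = 0) :
    IsReverseSecondMove (affineStar q r k) (affineSharp q p l) a b x y ↔
      r • x = q • a + b - k ∧ y = affineSharp q p l a x := by
  refine ⟨fun h => ⟨h.smul_left_eq, h.2.1⟩, ?_⟩
  rintro ⟨hx, rfl⟩
  unfold IsReverseSecondMove affineStar affineSharp
  refine ⟨?_, rfl, ?_, ?_⟩
  · linear_combination (norm := module) p • hx - hpq • x - hlk
  · linear_combination (norm := module) -hx
  · linear_combination (norm := module) -q • hx - hpq • a - hkl

theorem smul_add_smul_eq_zero_of_isSMulRegular (hr : IsSMulRegular M r)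
    (hpq : r * p + q ^ 2 = 1) (hkl : r • l + (1 - q) • k = 0) :
    p • k + (1 + q) • l = 0 := by
  refine hr.right_eq_zero_of_smul ?_
  linear_combination (norm := module) (1 + q) • hkl + hpq • k

theorem isReverseSecondMove_affine_iff_of_isSMulRegular (hr : IsSMulRegular M r)
    (hpq : r * p + q ^ 2 = 1) (hkl : r • l + (1 - q) • k = 0) :
    IsReverseSecondMove (affineStar q r k) (affineSharp q p l) a b x y ↔
      r • x = q • a + b - k ∧ r • y = q • b + a - k := by
  refine ⟨fun h => ⟨h.smul_left_eq, h.smul_right_eq⟩, fun ⟨hx, hy⟩ => ?_⟩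
  have hlk := smul_add_smul_eq_zero_of_isSMulRegular hr hpq hkl
  refine (isReverseSecondMove_affine_iff hpq hkl hlk).2 ⟨hx, hr ?_⟩
  unfold affineSharp
  linear_combination (norm := module) hy - q • hx - hpq • a - hkl

theorem forall_exists_isReverseSecondMove_affine_iff [FaithfulSMul R M] :
    (∀ a b : M, ∃ x y : M, IsReverseSecondMove (affineStar q r k) (affineSharp q p l) a b x y) ↔
      Surjective (r • · : M → M) ∧ r * p + q ^ 2 = 1 ∧
        r • l + (1 - q) • k = 0 ∧ p • k + (1 + q) • l = 0 := by
  constructor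
  · intro h
    have hsurj : Surjective (r • · : M → M) := fun z => by
      obtain ⟨x, y, hxy⟩ := h 0 (z + k)
      exact ⟨x, by simpa using hxy.smul_left_eq⟩
    obtain ⟨x, y, hxy⟩ := h 0 0
    have hkl : r • l + (1 - q) • k = 0 := by simpa using hxy.smul_outer_add_eq_zero
    have hpq : r * p + q ^ 2 = 1 := by
      refine sub_eq_zero.1 (FaithfulSMul.eq_of_smul_eq_smul (α := M) fun b => ?_)
      obtain ⟨x, y, hxy⟩ := h 0 b
      simpa [hkl] using hxy.smul_outer_add_eq_zero
    exact ⟨hsurj, hpq, hkl, by simpa [hpq] using hxy.smul_inner_add_eq_zero⟩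
  · rintro ⟨hsurj, hpq, hkl, hlk⟩ a b
    obtain ⟨x, hx⟩ := hsurj (q • a + b - k)
    exact ⟨x, _, (isReverseSecondMove_affine_iff hpq hkl hlk).2 ⟨hx, rfl⟩⟩

theorem affine_reverse_second_move_iff_general [FaithfulSMul R M] (q p r : R) (k l : M) :
    ((∀ a b : M, ∃ x y : M, IsReverseSecondMove (affineStar q r k) (affineSharp q p l) a b x y) ↔
      Surjective (r • · : M → M) ∧ r * p + q ^ 2 = 1 ∧
        r • l + (1 - q) • k = 0 ∧ p • k + (1 + q) • l = 0) ∧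
    (IsSMulRegular M r → r * p + q ^ 2 = 1 ∧ r • l + (1 - q) • k = 0 →
      ∀ a b x y : M, IsReverseSecondMove (affineStar q r k) (affineSharp q p l) a b x y ↔
        r • x = q • a + b - k ∧ r • y = q • b + a - k) :=
  ⟨forall_exists_isReverseSecondMove_affine_iff,
    fun hr h _ _ _ _ => isReverseSecondMove_affine_iff_of_isSMulRegular hr h.1 h.2⟩

end Affine

/-- Let `R` be a commutative ring with unit, let
`q, p, r, k, l ∈ R`, and assume `r` is invertible, say with inverse `v`.  Define
binary operations on `R` by `a * b := r a - q b + k` and `a # b := p a + q b + l`.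
Then the following are equivalent: (i) for all `a, b ∈ R` there exist `x, y ∈ R` with
`x = b # y`, `y = a # x`, `b = x * a` and `a = y * b` (the reverse-oriented second
flat Reidemeister move); (ii) `r p + q² = 1` and `r l + (1 - q) k = 0`.  Moreover,
when these hold, `x` and `y` are unique, namely `x = r⁻¹ (q a + b - k) = v (q a + b - k)`
and `y = r⁻¹ (q b + a - k) = v (q b + a - k)`. -/
theorem affine_reverse_second_move_iff {R : Type*} [CommRing R] (q p r k l v : R)
    (hv : r * v = 1) (star sharp : R → R → R)
    (hstar : ∀ a b : R, star a b = r * a - q * b + k)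
    (hsharp : ∀ a b : R, sharp a b = p * a + q * b + l) :
    ((∀ a b : R, ∃ x y : R,
        x = sharp b y ∧ y = sharp a x ∧ b = star x a ∧ a = star y b) ↔
      (r * p + q ^ 2 = 1 ∧ r * l + (1 - q) * k = 0)) ∧
    ((r * p + q ^ 2 = 1 ∧ r * l + (1 - q) * k = 0) →
      ∀ a b x y : R,
        (x = sharp b y ∧ y = sharp a x ∧ b = star x a ∧ a = star y b) ↔
          (x = v * (q * a + b - k) ∧ y = v * (q * b + a - k))) := by
  obtain rfl : star = affineStar q r k := funext₂ hstar
  obtain rfl : sharp = affineSharp q p l := funext₂ hsharp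
  have hr : Bijective (r • · : R → R) := (IsUnit.of_mul_eq_one v hv).smul_bijective
  have smul_eq_iff (z w : R) : r • z = w ↔ z = v * w :=
    smul_eq_iff_eq_inv_smul (Units.mkOfMulEqOne r v hv)
  obtain ⟨hiff, hsol⟩ := affine_reverse_second_move_iff_general q p r k l
  simp only [smul_eq_iff] at hsol
  refine ⟨hiff.trans ⟨fun ⟨_, hpq, hkl, _⟩ => ⟨hpq, hkl⟩, fun ⟨hpq, hkl⟩ => ?_⟩, hsol hr.injective⟩
  exact ⟨hr.surjective, hpq, hkl, smul_add_smul_eq_zero_of_isSMulRegular hr.injective hpq hkl⟩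
end

section
/- Let R be a commutative ring with unit and no zero divisors, and let p, q, r, k, l ∈ R with p ≠ 0. Define binary operations on R by a*b := ra − qb + k and a#b := pa + qb + l. If the identity (a#b)#c = (a#(c*b))#(b#c) holds for all a, b, c ∈ R, then q = 0. Consequently, if in addition rp + q² = 1 and rl + (1−q)k = 0, then rp = 1 and l = −pk, so the operations are a*b = p⁻¹a + k and a#b = pa − pk. (Thus the operations of the general affine linear flat biquandle are a*b = αa + k and a#b = α⁻¹a − α⁻¹k for an invertible α.) -/
section ThirdMove

variable {R : Type*} [CommRing R] {p q r k l : R} {star sharp : R → R → R}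

theorem affine_third_move_sub_eq (hstar : ∀ a b : R, star a b = r * a - q * b + k)
    (hsharp : ∀ a b : R, sharp a b = p * a + q * b + l) (a b c : R) :
    sharp (sharp a b) c - sharp (sharp a (star c b)) (sharp b c) =
      p * q ^ 2 * b + q * (1 - r * p - q) * c - q * (l + p * k) := by
  simp only [hstar, hsharp]
  ring

theorem mul_sq_eq_zero_of_affine_third_move
    (hstar : ∀ a b : R, star a b = r * a - q * b + k)
    (hsharp : ∀ a b : R, sharp a b = p * a + q * b + l)
    (H : ∀ a b c : R, sharp (sharp a b) c = sharp (sharp a (star c b)) (sharp b c)) :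
    p * q ^ 2 = 0 := by
  have defect_eq_zero (b : R) : p * q ^ 2 * b - q * (l + p * k) = 0 := by
    simpa [H 0 b 0] using (affine_third_move_sub_eq hstar hsharp 0 b 0).symm
  linear_combination defect_eq_zero 1 - defect_eq_zero 0

theorem eq_zero_of_affine_third_move [IsReduced R] (hp : IsRegular p)
    (hstar : ∀ a b : R, star a b = r * a - q * b + k)
    (hsharp : ∀ a b : R, sharp a b = p * a + q * b + l)
    (H : ∀ a b c : R, sharp (sharp a b) c = sharp (sharp a (star c b)) (sharp b c)) :
    q = 0 :=
  have hq : q ^ 2 = 0 :=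
    hp.left.mul_left_eq_zero_iff.mp (mul_sq_eq_zero_of_affine_third_move hstar hsharp H)
  eq_zero_of_pow_eq_zero hq

end ThirdMove

theorem eq_neg_mul_of_mul_add_eq_zero {R : Type*} [Ring R] {p r k l : R}
    (hpr : p * r = 1) (h : r * l + k = 0) : l = -(p * k) :=
  calc
    l = p * (r * l) := by rw [← mul_assoc, hpr, one_mul]
    _ = -(p * k) := by rw [eq_neg_of_add_eq_zero_left h, mul_neg]

theorem affine_third_move_forces_q_eq_zero_general {R : Type*} [CommRing R] [IsReduced R]
    (p q r k l : R) (hp : IsRegular p) (star sharp : R → R → R)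
    (hstar : ∀ a b : R, star a b = r * a - q * b + k)
    (hsharp : ∀ a b : R, sharp a b = p * a + q * b + l)
    (H : ∀ a b c : R, sharp (sharp a b) c = sharp (sharp a (star c b)) (sharp b c)) :
    q = 0 ∧
    (r * p + q ^ 2 = 1 → r * l + (1 - q) * k = 0 →
      (r * p = 1 ∧ l = -(p * k) ∧
        ∀ a b : R, star a b = r * a + k ∧ sharp a b = p * a - p * k)) := by
  obtain rfl : q = 0 := eq_zero_of_affine_third_move hp hstar hsharp H
  refine ⟨rfl, fun first_move second_move => ?_⟩
  have hrp : r * p = 1 := by simpa using first_move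
  have hl : l = -(p * k) :=
    eq_neg_mul_of_mul_add_eq_zero (mul_comm p r ▸ hrp) (by simpa using second_move)
  refine ⟨hrp, hl, fun a b => ⟨?_, ?_⟩⟩
  · simp [hstar]
  · simp [hsharp, hl, sub_eq_add_neg]

/-- Let `R` be a commutative ring with unit and no zero divisors,
and let `p, q, r, k, l ∈ R` with `p ≠ 0`.  Define binary operations on `R` by
`a * b := r a - q b + k` and `a # b := p a + q b + l`.  If the identity
`(a # b) # c = (a # (c * b)) # (b # c)` holds for all `a, b, c ∈ R` (a labelling
condition of the third flat Reidemeister move), then `q = 0`.  Consequently, if in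
addition `r p + q² = 1` and `r l + (1 - q) k = 0` (the conditions forced by the first
and second flat Reidemeister moves), then `r p = 1` and `l = -p k`, so the operations
are `a * b = p⁻¹ a + k` and `a # b = p a - p k`: the operations of the general affine
linear flat biquandle are `a * b = α a + k` and `a # b = α⁻¹ a - α⁻¹ k` for an
invertible `α`. -/
theorem affine_third_move_forces_q_eq_zero {R : Type*} [CommRing R] [NoZeroDivisors R]
    (p q r k l : R) (hp : p ≠ 0) (star sharp : R → R → R)
    (hstar : ∀ a b : R, star a b = r * a - q * b + k)
    (hsharp : ∀ a b : R, sharp a b = p * a + q * b + l)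
    (H : ∀ a b c : R, sharp (sharp a b) c = sharp (sharp a (star c b)) (sharp b c)) :
    q = 0 ∧
    (r * p + q ^ 2 = 1 → r * l + (1 - q) * k = 0 →
      (r * p = 1 ∧ l = -(p * k) ∧
        ∀ a b : R, star a b = r * a + k ∧ sharp a b = p * a - p * k)) :=
  affine_third_move_forces_q_eq_zero_general p q r k l (.of_ne_zero hp)
    star sharp hstar hsharp H
end
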